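/- Theorem 2 (output agreement on a prescribed set point via decentralized integral control). Fix y* ∈ ℝ^m and consider, for each controlled node i ∈ I_{11} ∪ I_{21}, the decentralized dynamic controller ξ̇_i = y* − G_iᵀ∇H_{n,i}(x_i), u_i = ξ_i. Assume the feasibility condition: there exist constant vectors x̄ ∈ (Ω_n)^N, η̄ ∈ (Ω_e)^M and d_i ∈ ℝ^m (i ∈ I_{11} ∪ I_{21}) such that (a) G_iᵀ∇H_{n,i}(x̄_i) = y* for every node i; (b) 0 = (J_i − R_i)∇H_{n,i}(x̄_i) − G_i(B_i ⊗ I_m)∇H_e(η̄) + G_i d_i for every i ∈ I_{11} ∪ I_{21}; (c) 0 = (J_i − R_i)∇H_{n,i}(x̄_i) − G_i(B_i ⊗ I_m)∇H_e(η̄) + G_i δ_i for every i ∈ I_{12} ∪ I_{22}. Set ξ̄_i = d_i − δ_i for i ∈ I_{11} ∪ I_{21}. Then there exists an open set U of initial conditions containing (x̄, η̄, ξ̄) such that every solution (x, η, ξ) of the closed-loop system with initial condition in U is defined for all t ≥ 0 and converges as t → ∞ to an equilibrium (x̃, η̃, ξ̃) of the closed-loop system at which G_iᵀ∇H_{n,i}(x̃_i)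 = y* for every node i. -/

import Mathlib

open Matrix Filter Topology Set

/-- The gradient of `H : ℝ^p → ℝ` in coordinates: `(∇H(x))_j = DH(x)[e_j]`. -/
noncomputable def grad {p : ℕ} (H : (Fin p → ℝ) → ℝ) (x : Fin p → ℝ) : Fin p → ℝ :=
  fun j => fderiv ℝ H x (Pi.single j 1)

/-!
An integral controller `ξ̇ = y* - y`, `u = ξ` is a port-Hamiltonian link with energy `|ξ|² / 2`,
attached to its node at one end only. The closed loop is thus again a network of dissipative nodes
and lossless links, with no inputs, and `(x̄, η̄, ξ̄)` is an equilibrium of it at which every output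
is `y*`.

Relative to any such equilibrium `p`, the sum of the Bregman divergences of the energies of the
dynamic nodes and of the links is a storage function `V_p`. The interconnection cancels in the power
balance, so `V_p` decreases at the rate at which the nodes dissipate, a quadratic form in
`∇H_n(x) - ∇H_n(x_p)`. The constraint at a static node determines its state from the link states,
which makes `V_p` positive definite on the consistent states and confines the trajectories starting
near `p` to a compact set. On it Barbalat's lemma applies twice: to `V_p`, giving `x → x_p`, and to
`x`, giving `ẋ → 0`. Hence every cluster point `q` of the trajectory is an equilibrium with output
`y*`, although possibly not with the link states of `p`; since `V_q` is nonincreasing and tends to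
`0` along a subsequence, the trajectory converges to `q`.
-/

section Bregman

variable {E : Type*} [NormedAddCommGroup E] [NormedSpace ℝ E] {H : E → ℝ} {Ω : Set E} {a x : E}

/-- The Bregman divergence of `H` at `x` relative to `a`, the gap at `x` between `H` and its tangent
at `a`. It is the storage function of a single node or link. -/
noncomputable def bregman (H : E → ℝ) (a x : E) : ℝ :=
  H x - H a - fderiv ℝ H a (x - a)

@[simp]
lemma bregman_self (H : E → ℝ) (a : E) : bregman H a a = 0 := by
  simp [bregman]

lemma continuousOn_bregman (hH : ContinuousOn H Ω) (a : E) : ContinuousOn (bregman H a) Ω := by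
  unfold bregman
  fun_prop

lemma bregman_pos (hH : StrictConvexOn ℝ Ω H) (hd : DifferentiableAt ℝ H a) (ha : a ∈ Ω)
    (hx : x ∈ Ω) (hne : x ≠ a) : 0 < bregman H a x := by
  let l : ℝ →ᵃ[ℝ] E := AffineMap.lineMap a x
  have hl0 : l 0 = a := AffineMap.lineMap_apply_zero a x
  have hl1 : l 1 = x := AffineMap.lineMap_apply_one a x
  have hconv : StrictConvexOn ℝ (l ⁻¹' Ω) (H ∘ l) :=
    ⟨hH.1.affine_preimage l, fun s hs t ht hst α β hα hβ hαβ => by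
      have hne' : l s ≠ l t := (AffineMap.lineMap_injective ℝ hne.symm).ne hst
      have hlt := hH.2 hs ht hne' hα hβ hαβ
      rwa [← Convex.combo_affine_apply hαβ] at hlt⟩
  have hderiv : HasDerivAt (H ∘ l) (fderiv ℝ H a (x - a)) 0 :=
    HasFDerivAt.comp_hasDerivAt (0 : ℝ) (hl0 ▸ hd.hasFDerivAt) AffineMap.hasDerivAt_lineMap
  have hslope := hconv.lt_slope_of_hasDerivAt (x := 0) (y := 1) (by simpa [hl0] using ha)
    (by simpa [hl1] using hx) one_pos hderiv
  simp only [slope_def_field, Function.comp_apply, hl0, hl1, sub_zero, div_one] at hslope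
  exact sub_pos.2 hslope

lemma bregman_nonneg (hH : StrictConvexOn ℝ Ω H) (hd : DifferentiableAt ℝ H a) (ha : a ∈ Ω)
    (hx : x ∈ Ω) : 0 ≤ bregman H a x := by
  rcases eq_or_ne x a with rfl | hne
  · exact (bregman_self H x).ge
  · exact (bregman_pos hH hd ha hx hne).le

lemma bregman_eq_zero_iff (hH : StrictConvexOn ℝ Ω H) (hd : DifferentiableAt ℝ H a) (ha : a ∈ Ω)
    (hx : x ∈ Ω) : bregman H a x = 0 ↔ x = a :=
  ⟨fun h => by_contra fun hne => (bregman_pos hH hd ha hx hne).ne' h,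
    fun h => h ▸ bregman_self H x⟩

lemma injOn_fderiv_of_strictConvexOn (hH : StrictConvexOn ℝ Ω H)
    (hd : ∀ x ∈ Ω, DifferentiableAt ℝ H x) : InjOn (fderiv ℝ H) Ω := by
  intro x hx a ha h
  by_contra hne
  have hxa := bregman_pos hH (hd a ha) ha hx hne
  have hax := bregman_pos hH (hd x hx) hx ha (Ne.symm hne)
  simp only [bregman, h, map_sub] at hxa hax
  linarith

lemma hasDerivWithinAt_bregman_comp (a : E) {γ : ℝ → E} {v : E} {t : ℝ} {s : Set ℝ}
    (hd : DifferentiableAt ℝ H (γ t)) (hγ : HasDerivWithinAt γ v s t) :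
    HasDerivWithinAt (fun τ => bregman H a (γ τ)) (fderiv ℝ H (γ t) v - fderiv ℝ H a v) s t :=
  ((hd.hasFDerivAt.comp_hasDerivWithinAt t hγ).sub_const (H a)).sub
    ((fderiv ℝ H a).hasFDerivAt.comp_hasDerivWithinAt t (hγ.sub_const a))

end Bregman

section Gradient

variable {p : ℕ} {H : (Fin p → ℝ) → ℝ} {Ω : Set (Fin p → ℝ)}

lemma grad_dotProduct (H : (Fin p → ℝ) → ℝ) (x v : Fin p → ℝ) :
    grad H x ⬝ᵥ v = fderiv ℝ H x v := by
  conv_rhs => rw [← Finset.univ_sum_single v, map_sum]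
  refine Finset.sum_congr rfl fun j _ => ?_
  have hsingle : Pi.single j (v j) = v j • Pi.single j (1 : ℝ) := by
    rw [← Pi.single_smul, smul_eq_mul, mul_one]
  rw [hsingle, map_smul, grad, smul_eq_mul, mul_comm]

lemma continuousOn_grad (hΩ : IsOpen Ω) (hH : ContDiffOn ℝ 1 H Ω) : ContinuousOn (grad H) Ω :=
  continuousOn_pi.2 fun _ =>
    (hH.continuousOn_fderiv_of_isOpen hΩ le_rfl).clm_apply continuousOn_const

lemma injOn_grad_of_strictConvexOn (hH : StrictConvexOn ℝ Ω H)
    (hd : ∀ x ∈ Ω, DifferentiableAt ℝ H x) : InjOn (grad H) Ω := fun x hx y hy h =>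
  injOn_fderiv_of_strictConvexOn hH hd hx hy <| ContinuousLinearMap.ext fun v => by
    rw [← grad_dotProduct, h, grad_dotProduct]

end Gradient

section HalfNormSq

variable {p : ℕ}

/-- The energy `|ξ|² / 2` of an integrator with state `ξ`; it is not phrased through the norm
because `Fin p → ℝ` carries the sup norm. -/
noncomputable def halfNormSq (ξ : Fin p → ℝ) : ℝ := ξ ⬝ᵥ ξ / 2

lemma contDiff_halfNormSq {k : WithTop ℕ∞} : ContDiff ℝ k (halfNormSq (p := p)) := by
  unfold halfNormSq dotProduct
  fun_prop

lemma strictConvexOn_halfNormSq : StrictConvexOn ℝ univ (halfNormSq (p := p)) := by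
  refine ⟨convex_univ, fun x _ y _ hxy a b ha hb hab => ?_⟩
  have hpos : 0 < (x - y) ⬝ᵥ (x - y) := by
    simpa using dotProduct_self_star_pos_iff.2 (sub_ne_zero.2 hxy)
  have hgap : a • halfNormSq x + b • halfNormSq y - halfNormSq (a • x + b • y)
      = a * b * ((x - y) ⬝ᵥ (x - y)) / 2 := by
    obtain rfl : b = 1 - a := by linarith
    simp only [halfNormSq, smul_eq_mul, add_dotProduct, dotProduct_add, sub_dotProduct,
      dotProduct_sub, smul_dotProduct, dotProduct_smul, dotProduct_comm y x]
    ring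
  have : 0 < a * b * ((x - y) ⬝ᵥ (x - y)) / 2 := by positivity
  linarith

@[simp]
lemma grad_halfNormSq (ξ : Fin p → ℝ) : grad halfNormSq ξ = ξ := by
  have hderiv : HasFDerivAt halfNormSq
      ((2⁻¹ : ℝ) • ∑ j, (ξ j • ContinuousLinearMap.proj (R := ℝ) (φ := fun _ : Fin p => ℝ) j
        + ξ j • ContinuousLinearMap.proj j)) ξ := by
    unfold halfNormSq dotProduct
    simp_rw [div_eq_inv_mul]
    exact (HasFDerivAt.fun_sum fun j _ =>
      (hasFDerivAt_apply j ξ).mul (hasFDerivAt_apply j ξ)).const_mul 2⁻¹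
  funext j
  have hj : grad halfNormSq ξ j = 2⁻¹ * (ξ j + ξ j) := by
    simp [grad, hderiv.fderiv, Pi.single_apply, Finset.sum_add_distrib, mul_add]
  rw [hj]
  ring

end HalfNormSq

section Compactness

variable {X : Type*} [TopologicalSpace X] {K : Set X}

lemma exists_pos_forall_lt_imp_mem (hK : IsCompact K) {U : Set X} (hU : IsOpen U) {f : X → ℝ}
    (hf : ContinuousOn f K) (hpos : ∀ q ∈ K, q ∉ U → 0 < f q) :
    ∃ c > 0, ∀ q ∈ K, f q < c → q ∈ U := by
  obtain ⟨c, hc, hle⟩ := (hK.diff hU).exists_forall_le' (hf.mono sdiff_subset) (a := 0)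
    fun q hq => hpos q hq.1 hq.2
  exact ⟨c, hc, fun q hq hlt => by_contra fun hqU => (hle q ⟨hq, hqU⟩).not_gt hlt⟩

lemma tendsto_nhds_of_tendsto_zero_of_isCompact {Y : Type*} [TopologicalSpace Y]
    (hK : IsCompact K) {f : X → ℝ} {g : X → Y} {y : Y} (hf : ContinuousOn f K)
    (hg : ContinuousOn g K) (hfg : ∀ q ∈ K, f q = 0 → g q = y)
    {α : Type*} {l : Filter α} {s : α → X} (hs : ∀ᶠ t in l, s t ∈ K)
    (hlim : Tendsto (fun t => f (s t)) l (𝓝 0)) :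
    Tendsto (fun t => g (s t)) l (𝓝 y) := by
  rw [tendsto_iff_ultrafilter]
  intro u hu
  obtain ⟨q, hq, hsq⟩ := hK.ultrafilter_le_nhds (u.map s) (le_principal_iff.2 (hu hs))
  have hsq' : Tendsto s u (𝓝[K] q) := tendsto_nhdsWithin_iff.2 ⟨hsq, hu hs⟩
  have hfq : f q = 0 := tendsto_nhds_unique ((hf q hq).tendsto.comp hsq') (hlim.mono_left hu)
  exact hfg q hq hfq ▸ (hg q hq).tendsto.comp hsq'

end Compactness

lemma uniformContinuousOn_of_comp_of_isCompact {X Y Z : Type*} [UniformSpace X] [UniformSpace Y]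
    [T2Space Y] [UniformSpace Z] {K : Set X} (hK : IsCompact K) {f : X → Y}
    (hf : ContinuousOn f K) (hinj : InjOn f K) {s : Z → X} {A : Set Z} (hs : MapsTo s A K)
    (hfs : UniformContinuousOn (fun t => f (s t)) A) : UniformContinuousOn s A := by
  have := isCompact_iff_compactSpace.1 hK
  have hemb : IsEmbedding (K.domRestrict f) :=
    (hf.domRestrict.isClosedEmbedding hinj.injective).isEmbedding
  have hunif : IsUniformInducing (K.domRestrict f) :=
    ⟨congrArg (fun u : UniformSpace K => u.uniformity)
      (unique_uniformity_of_compact (u := UniformSpace.comap (K.domRestrict f) inferInstance)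
        hemb.eq_induced.symm rfl)⟩
  rw [uniformContinuousOn_iff_restrict] at hfs ⊢
  exact uniformContinuous_subtype_val.comp
    (hunif.uniformContinuous_iff (f := MapsTo.restrict s A K hs) |>.2 hfs)

section HalfLine

variable {E : Type*} [NormedAddCommGroup E] [NormedSpace ℝ E] {F f : ℝ → E} {a : ℝ}

lemma norm_sub_sub_smul_le_of_hasDerivWithinAt {b C : ℝ} (hab : a ≤ b)
    (hF : ∀ t ∈ Icc a b, HasDerivWithinAt F (f t) (Icc a b) t)
    (hf : ∀ t ∈ Icc a b, ‖f t - f a‖ ≤ C) :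
    ‖F b - F a - (b - a) • f a‖ ≤ C * (b - a) := by
  have hderiv : ∀ t ∈ Icc a b,
      HasDerivWithinAt (fun t => F t - t • f a) (f t - f a) (Icc a b) t := fun t ht => by
    simpa using (hF t ht).fun_sub ((hasDerivWithinAt_id t _).smul_const (f a))
  have hle := (convex_Icc a b).norm_image_sub_le_of_norm_hasDerivWithin_le hderiv hf
    (left_mem_Icc.2 hab) (right_mem_Icc.2 hab)
  rw [Real.norm_of_nonneg (sub_nonneg.2 hab)] at hle
  convert hle using 2
  module

/-- Barbalat's lemma. -/
lemma tendsto_zero_of_hasDerivWithinAt_of_uniformContinuousOn {L : E}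
    (hF : ∀ t ∈ Ici a, HasDerivWithinAt F (f t) (Ici a) t) (hL : Tendsto F atTop (𝓝 L))
    (hf : UniformContinuousOn f (Ici a)) : Tendsto f atTop (𝓝 0) := by
  rw [Metric.tendsto_nhds]
  intro ε hε
  obtain ⟨δ, hδ, hfδ⟩ := Metric.uniformContinuousOn_iff_le.1 hf (ε / 2) (half_pos hε)
  have hincr : Tendsto (fun t => F (t + δ) - F t) atTop (𝓝 0) := by
    simpa using (hL.comp (tendsto_atTop_add_const_right _ δ tendsto_id)).sub hL
  filter_upwards [hincr.norm.eventually_lt_const (u := ε / 2 * δ) (by simpa using by positivity),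
    eventually_ge_atTop a] with t hsmall ht
  have hsub : Icc t (t + δ) ⊆ Ici a := fun r hr => ht.trans hr.1
  have htaylor : ‖F (t + δ) - F t - δ • f t‖ ≤ ε / 2 * δ := by
    simpa using norm_sub_sub_smul_le_of_hasDerivWithinAt (by linarith : t ≤ t + δ)
      (fun r hr => (hF r (hsub hr)).mono hsub) (C := ε / 2) fun r hr => by
        rw [← dist_eq_norm]
        refine hfδ r (hsub hr) t ht ?_
        rw [Real.dist_eq, abs_of_nonneg (sub_nonneg.2 hr.1)]
        linarith [hr.2]
  have hlt : δ * ‖f t‖ < δ * ε := calc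
    δ * ‖f t‖ = ‖δ • f t‖ := by rw [norm_smul, Real.norm_of_nonneg hδ.le]
    _ ≤ ‖F (t + δ) - F t‖ + ‖F (t + δ) - F t - δ • f t‖ := norm_le_norm_add_norm_sub _ _
    _ < δ * ε := by linarith
  simpa using lt_of_mul_lt_mul_left hlt hδ.le

lemma exists_tendsto_atTop_of_antitoneOn_Ici {g : ℝ → ℝ} {b : ℝ} (hg : AntitoneOn g (Ici a))
    (hb : ∀ t ∈ Ici a, b ≤ g t) : ∃ L, Tendsto g atTop (𝓝 L) := by
  have hanti : Antitone fun t => g (max t a) := fun r t hrt =>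
    hg (le_max_right r a) (le_max_right t a) (max_le_max_right a hrt)
  have hbdd : BddBelow (range fun t => g (max t a)) :=
    ⟨b, forall_mem_range.2 fun t => hb _ (le_max_right t a)⟩
  refine ⟨_, (tendsto_atTop_ciInf hanti hbdd).congr' ?_⟩
  filter_upwards [eventually_ge_atTop a] with t ht
  rw [max_eq_left ht]

/-- A first-exit argument: at the first time `T` with `ε ≤ g T`, continuity gives `g ≤ ε` on
`[a, T]`. -/
lemma forall_lt_of_forall_Icc_le_imp_lt {g : ℝ → ℝ} {ε : ℝ} (hg : ContinuousOn g (Ici a))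
    (ha : g a < ε) (h : ∀ T ∈ Ici a, (∀ t ∈ Icc a T, g t ≤ ε) → g T < ε) :
    ∀ t ∈ Ici a, g t < ε := by
  by_contra! hexit
  let S := Ici a ∩ g ⁻¹' Ici ε
  have hbdd : BddBelow S := ⟨a, fun t ht => ht.1⟩
  obtain ⟨haT, hεT⟩ : sInf S ∈ S :=
    (hg.preimage_isClosed_of_isClosed isClosed_Ici isClosed_Ici).csInf_mem hexit hbdd
  set T := sInf S
  have hlt : ∀ t ∈ Ico a T, g t < ε := fun t ht =>
    not_le.1 fun hεt => notMem_of_lt_csInf ht.2 hbdd ⟨ht.1, hεt⟩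
  have hne : a ≠ T := fun haT' => ha.not_ge (haT' ▸ hεT)
  have hle : ∀ t ∈ closure (Ico a T), g t ≤ ε := fun t ht =>
    ContinuousWithinAt.closure_le ht
      ((hg t (closure_minimal (fun r hr => hr.1) isClosed_Ici ht)).mono fun r hr => hr.1)
      continuousWithinAt_const fun r hr => (hlt r hr).le
  rw [closure_Ico hne] at hle
  exact (h T haT hle).not_ge hεT

end HalfLine

/-- The state `(x, η)` of a network: one vector for each node and one for each link. -/
abbrev NetworkState {ι : Type*} (κ : Type*) (n : ι → ℕ) (m : ℕ) : Type _ :=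
  (∀ i, Fin (n i) → ℝ) × (κ → Fin m → ℝ)

/-- A network of dissipative nodes coupled by storing links, together with the set point `y*` for
the outputs. The matrix `A i`, whose quadratic form is negative definite, encodes `J_i - R_i`, and
the columns of `B` are not required to sum to zero, so that a link may have a single end. -/
structure PortHamiltonianNetwork (ι κ : Type*) (n : ι → ℕ) (m : ℕ) where
  B : Matrix ι κ ℝ
  A : ∀ i, Matrix (Fin (n i)) (Fin (n i)) ℝ
  dotProduct_A_mulVec_neg : ∀ i z, z ≠ 0 → z ⬝ᵥ A i *ᵥ z < 0
  G : ∀ i, Matrix (Fin (n i)) (Fin m) ℝ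
  δ : ι → Fin m → ℝ
  Ωn : ∀ i, Set (Fin (n i) → ℝ)
  isOpen_Ωn : ∀ i, IsOpen (Ωn i)
  Hn : ∀ i, (Fin (n i) → ℝ) → ℝ
  contDiffOn_Hn : ∀ i, ContDiffOn ℝ 1 (Hn i) (Ωn i)
  strictConvexOn_Hn : ∀ i, StrictConvexOn ℝ (Ωn i) (Hn i)
  Ωe : κ → Set (Fin m → ℝ)
  isOpen_Ωe : ∀ k, IsOpen (Ωe k)
  He : κ → (Fin m → ℝ) → ℝ
  contDiffOn_He : ∀ k, ContDiffOn ℝ 1 (He k) (Ωe k)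
  strictConvexOn_He : ∀ k, StrictConvexOn ℝ (Ωe k) (He k)
  ystar : Fin m → ℝ

namespace PortHamiltonianNetwork

variable {ι κ : Type*} {n : ι → ℕ} {m : ℕ} (S : PortHamiltonianNetwork ι κ n m) (D : Finset ι)
  {p q s : NetworkState κ n m} {K : Set (NetworkState κ n m)} {γ : ℝ → NetworkState κ n m} {t : ℝ}
  {i : ι} {k : κ}

lemma differentiableAt_Hn {x : Fin (n i) → ℝ} (hx : x ∈ S.Ωn i) : DifferentiableAt ℝ (S.Hn i) x :=
  ((S.contDiffOn_Hn i).differentiableOn one_ne_zero).differentiableAt ((S.isOpen_Ωn i).mem_nhds hx)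

lemma differentiableAt_He {y : Fin m → ℝ} (hy : y ∈ S.Ωe k) : DifferentiableAt ℝ (S.He k) y :=
  ((S.contDiffOn_He k).differentiableOn one_ne_zero).differentiableAt ((S.isOpen_Ωe k).mem_nhds hy)

lemma injOn_grad_Hn (i : ι) : InjOn (grad (S.Hn i)) (S.Ωn i) :=
  injOn_grad_of_strictConvexOn (S.strictConvexOn_Hn i) fun _ => S.differentiableAt_Hn

lemma dotProduct_A_mulVec_nonpos (i : ι) (z : Fin (n i) → ℝ) : z ⬝ᵥ S.A i *ᵥ z ≤ 0 := by
  rcases eq_or_ne z 0 with rfl | hz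
  · rw [zero_dotProduct]
  · exact (S.dotProduct_A_mulVec_neg i z hz).le

lemma mulVec_A_injective (i : ι) : Function.Injective (S.A i).mulVec := fun z w h => by
  by_contra hne
  have hneg := S.dotProduct_A_mulVec_neg i (z - w) (sub_ne_zero.2 hne)
  rw [mulVec_sub, h, sub_self, dotProduct_zero] at hneg
  exact lt_irrefl 0 hneg

/-- The states at which all energies are differentiable. -/
def domain : Set (NetworkState κ n m) :=
  {s | (∀ i, s.1 i ∈ S.Ωn i) ∧ ∀ k, s.2 k ∈ S.Ωe k}

lemma isOpen_domain [Finite ι] [Finite κ] : IsOpen S.domain := by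
  simp only [domain, ofPred_and, ofPred_forall]
  exact (isOpen_iInter_of_finite fun i => (S.isOpen_Ωn i).preimage (by fun_prop)).inter
    (isOpen_iInter_of_finite fun k => (S.isOpen_Ωe k).preimage (by fun_prop))

/-- The output `G_iᵀ ∇H_{n,i}(x_i)` of node `i`. -/
noncomputable def output (i : ι) (x : ∀ i, Fin (n i) → ℝ) : Fin m → ℝ :=
  (S.G i)ᵀ *ᵥ grad (S.Hn i) (x i)

lemma continuousOn_grad_Hn (i : ι) :
    ContinuousOn (fun s : NetworkState κ n m => grad (S.Hn i) (s.1 i)) S.domain :=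
  (continuousOn_grad (S.isOpen_Ωn i) (S.contDiffOn_Hn i)).comp (by fun_prop) fun _ hs => hs.1 i

lemma continuousOn_grad_He (k : κ) :
    ContinuousOn (fun s : NetworkState κ n m => grad (S.He k) (s.2 k)) S.domain :=
  (continuousOn_grad (S.isOpen_Ωe k) (S.contDiffOn_He k)).comp (by fun_prop) fun _ hs => hs.2 k

lemma bregman_Hn_nonneg (hp : p ∈ S.domain) (hs : s ∈ S.domain) (i : ι) :
    0 ≤ bregman (S.Hn i) (p.1 i) (s.1 i) :=
  bregman_nonneg (S.strictConvexOn_Hn i) (S.differentiableAt_Hn (hp.1 i)) (hp.1 i) (hs.1 i)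

lemma bregman_He_nonneg (hp : p ∈ S.domain) (hs : s ∈ S.domain) (k : κ) :
    0 ≤ bregman (S.He k) (p.2 k) (s.2 k) :=
  bregman_nonneg (S.strictConvexOn_He k) (S.differentiableAt_He (hp.2 k)) (hp.2 k) (hs.2 k)

lemma continuousOn_output (i : ι) :
    ContinuousOn (fun s : NetworkState κ n m => S.output i s.1) S.domain :=
  (S.G i)ᵀ.mulVecLin.continuous_of_finiteDimensional.comp_continuousOn (S.continuousOn_grad_Hn i)

section Dissipation

variable [Fintype ι]

/-- The right-hand side of the equation of link `k`, written with the deviations from the set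
point: for an incidence matrix, whose columns sum to zero, this is the usual one. -/
noncomputable def linkField (k : κ) (s : NetworkState κ n m) : Fin m → ℝ :=
  ∑ i, S.B i k • (S.output i s.1 - S.ystar)

lemma continuousOn_linkField (k : κ) : ContinuousOn (S.linkField k) S.domain :=
  continuousOn_finsetSum _ fun i _ =>
    ((S.continuousOn_output i).sub continuousOn_const).fun_const_smul _

/-- The rate at which the nodes dissipate the storage relative to the state `p`. -/
noncomputable def dissipation (p s : NetworkState κ n m) : ℝ :=
  -∑ i, (grad (S.Hn i) (s.1 i) - grad (S.Hn i) (p.1 i)) ⬝ᵥ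
    S.A i *ᵥ (grad (S.Hn i) (s.1 i) - grad (S.Hn i) (p.1 i))

lemma continuousOn_dissipation (p : NetworkState κ n m) :
    ContinuousOn (S.dissipation p) S.domain := by
  refine (continuousOn_finsetSum _ fun i _ => ?_).neg
  have hgrad := (S.continuousOn_grad_Hn i).sub
    (continuousOn_const (c := grad (S.Hn i) (p.1 i)))
  exact Continuous.comp_continuousOn (g := fun z => z ⬝ᵥ S.A i *ᵥ z) (by fun_prop) hgrad

lemma dissipation_nonneg (p s : NetworkState κ n m) : 0 ≤ S.dissipation p s :=
  neg_nonneg.2 (Finset.sum_nonpos fun i _ => S.dotProduct_A_mulVec_nonpos i _)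

lemma fst_eq_of_dissipation_eq_zero (hp : p ∈ S.domain) (hs : s ∈ S.domain)
    (h : S.dissipation p s = 0) : s.1 = p.1 := by
  funext i
  refine S.injOn_grad_Hn i (hs.1 i) (hp.1 i) (sub_eq_zero.1 (by_contra fun hne => ?_))
  have hzero := (Finset.sum_eq_zero_iff_of_nonpos fun i _ => S.dotProduct_A_mulVec_nonpos i _).1
    (neg_eq_zero.1 h) i (Finset.mem_univ i)
  exact (S.dotProduct_A_mulVec_neg i _ hne).ne hzero

end Dissipation

variable [Fintype κ]

/-- The right-hand side of the equation of node `i` under the input `u`. -/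
noncomputable def nodeForce (i : ι) (x : ∀ i, Fin (n i) → ℝ) (η : κ → Fin m → ℝ)
    (u : Fin m → ℝ) : Fin (n i) → ℝ :=
  S.A i *ᵥ grad (S.Hn i) (x i) - S.G i *ᵥ (∑ k, S.B i k • grad (S.He k) (η k)) + S.G i *ᵥ u

/-- The right-hand side of the equation of node `i` of the uncontrolled network. -/
noncomputable def nodeField (i : ι) (s : NetworkState κ n m) : Fin (n i) → ℝ :=
  S.nodeForce i s.1 s.2 (S.δ i)

/-- The states satisfying the algebraic constraints of the static nodes, those outside `D`. -/
def consistentSet : Set (NetworkState κ n m) := {s | ∀ i ∉ D, S.nodeField i s = 0}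

/-- An equilibrium at which all outputs are equal to the set point. -/
structure IsEquilibrium (p : NetworkState κ n m) : Prop where
  mem_domain : p ∈ S.domain
  nodeField_eq_zero : ∀ i, S.nodeField i p = 0
  output_eq : ∀ i, S.output i p.1 = S.ystar

variable {S D}

lemma IsEquilibrium.mem_consistentSet (hp : S.IsEquilibrium p) : p ∈ S.consistentSet D :=
  fun i _ => hp.nodeField_eq_zero i

lemma IsEquilibrium.nodeField_eq (hp : S.IsEquilibrium p) (i : ι) (s : NetworkState κ n m) :
    S.nodeField i s = S.A i *ᵥ (grad (S.Hn i) (s.1 i) - grad (S.Hn i) (p.1 i))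
      - S.G i *ᵥ (∑ k, S.B i k • (grad (S.He k) (s.2 k) - grad (S.He k) (p.2 k))) := by
  rw [← sub_zero (S.nodeField i s), ← hp.nodeField_eq_zero i]
  simp only [nodeField, nodeForce, mulVec_sub, smul_sub, Finset.sum_sub_distrib]
  abel

lemma IsEquilibrium.output_sub_ystar (hp : S.IsEquilibrium p) (i : ι) (s : NetworkState κ n m) :
    S.output i s.1 - S.ystar
      = (S.G i)ᵀ *ᵥ (grad (S.Hn i) (s.1 i) - grad (S.Hn i) (p.1 i)) := by
  rw [← hp.output_eq i, output, output, ← mulVec_sub]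

lemma IsEquilibrium.of_fst_eq (hp : S.IsEquilibrium p) (hq : q ∈ S.domain) (h : q.1 = p.1)
    (hfield : ∀ i, S.nodeField i q = 0) : S.IsEquilibrium q :=
  ⟨hq, hfield, fun i => h ▸ hp.output_eq i⟩

variable (S D)

lemma continuousOn_nodeField (i : ι) : ContinuousOn (S.nodeField i) S.domain := by
  have hsum : ContinuousOn (fun s : NetworkState κ n m => ∑ k, S.B i k • grad (S.He k) (s.2 k))
      S.domain := continuousOn_finsetSum _ fun k _ => (S.continuousOn_grad_He k).fun_const_smul _
  exact (((S.A i).mulVecLin.continuous_of_finiteDimensional.comp_continuousOn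
    (S.continuousOn_grad_Hn i)).sub
    ((S.G i).mulVecLin.continuous_of_finiteDimensional.comp_continuousOn hsum)).add
    continuousOn_const

lemma isCompact_inter_consistentSet (hK : IsCompact K) (hKS : K ⊆ S.domain) :
    IsCompact (K ∩ S.consistentSet D) := by
  have hcont : ContinuousOn (fun s (i : {i // i ∉ D}) => S.nodeField i s) K :=
    continuousOn_pi.2 fun i => (S.continuousOn_nodeField i).mono hKS
  convert hK.of_isClosed_subset
    (hcont.preimage_isClosed_of_isClosed hK.isClosed (isClosed_singleton (x := 0)))
    inter_subset_left using 2
  ext s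
  simp [consistentSet, funext_iff]

/-- At a static node the link variables determine `∇H_{n,i}(x_i)`, and the gradient of a strictly
convex function is injective. -/
lemma injOn_restrict :
    InjOn (fun s : NetworkState κ n m => (D.restrict s.1, s.2)) (S.domain ∩ S.consistentSet D) := by
  rintro ⟨x, η⟩ ⟨hx, hxD⟩ ⟨x', η'⟩ ⟨hx', hxD'⟩ h
  obtain ⟨hD, rfl⟩ : D.restrict x = D.restrict x' ∧ η = η' := Prod.ext_iff.1 h
  refine Prod.ext (funext fun i => ?_) rfl
  by_cases hi : i ∈ D
  · exact congrFun hD ⟨i, hi⟩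
  · refine S.injOn_grad_Hn i (hx.1 i) (hx'.1 i) (S.mulVec_A_injective i ?_)
    have hzero := (hxD i hi).trans (hxD' i hi).symm
    simpa only [nodeField, nodeForce, add_left_inj, sub_left_inj] using hzero

/-- The storage function of the network relative to the state `p`; the static nodes, those outside
`D`, store nothing. -/
noncomputable def storage (p s : NetworkState κ n m) : ℝ :=
  ∑ i ∈ D, bregman (S.Hn i) (p.1 i) (s.1 i) + ∑ k, bregman (S.He k) (p.2 k) (s.2 k)

@[simp]
lemma storage_self (p : NetworkState κ n m) : S.storage D p p = 0 := by
  simp [storage]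

lemma continuousOn_storage (p : NetworkState κ n m) : ContinuousOn (S.storage D p) S.domain :=
  (continuousOn_finsetSum _ fun i _ =>
    (continuousOn_bregman (S.contDiffOn_Hn i).continuousOn _).comp (by fun_prop)
      fun _ hs => hs.1 i).add
  (continuousOn_finsetSum _ fun k _ =>
    (continuousOn_bregman (S.contDiffOn_He k).continuousOn _).comp (by fun_prop)
      fun _ hs => hs.2 k)

lemma storage_nonneg (hp : p ∈ S.domain) (hs : s ∈ S.domain) : 0 ≤ S.storage D p s :=
  add_nonneg (Finset.sum_nonneg fun i _ => S.bregman_Hn_nonneg hp hs i)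
    (Finset.sum_nonneg fun k _ => S.bregman_He_nonneg hp hs k)

lemma eq_of_storage_eq_zero (hp : p ∈ S.domain ∩ S.consistentSet D)
    (hs : s ∈ S.domain ∩ S.consistentSet D) (h : S.storage D p s = 0) : s = p := by
  obtain ⟨hn, he⟩ := (add_eq_zero_iff_of_nonneg
    (Finset.sum_nonneg fun i _ => S.bregman_Hn_nonneg hp.1 hs.1 i)
    (Finset.sum_nonneg fun k _ => S.bregman_He_nonneg hp.1 hs.1 k)).1 h
  rw [Finset.sum_eq_zero_iff_of_nonneg fun i _ => S.bregman_Hn_nonneg hp.1 hs.1 i] at hn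
  rw [Finset.sum_eq_zero_iff_of_nonneg fun k _ => S.bregman_He_nonneg hp.1 hs.1 k] at he
  refine S.injOn_restrict D hs hp (Prod.ext (funext fun i => ?_) (funext fun k => ?_))
  · exact (bregman_eq_zero_iff (S.strictConvexOn_Hn i) (S.differentiableAt_Hn (hp.1.1 i))
      (hp.1.1 i) (hs.1.1 i)).1 (hn i i.2)
  · exact (bregman_eq_zero_iff (S.strictConvexOn_He k) (S.differentiableAt_He (hp.1.2 k))
      (hp.1.2 k) (hs.1.2 k)).1 (he k (Finset.mem_univ k))

lemma storage_pos (hp : p ∈ S.domain ∩ S.consistentSet D) (hs : s ∈ S.domain ∩ S.consistentSet D)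
    (hne : s ≠ p) : 0 < S.storage D p s :=
  (S.storage_nonneg D hp.1 hs.1).lt_of_ne' fun h => hne (S.eq_of_storage_eq_zero D hp hs h)

variable [Fintype ι]

variable {S}

/-- The interconnection is lossless: in the power balance the exchange between nodes and links
cancels. -/
lemma IsEquilibrium.power_balance (hp : S.IsEquilibrium p) (s : NetworkState κ n m) :
    ∑ i, (grad (S.Hn i) (s.1 i) - grad (S.Hn i) (p.1 i)) ⬝ᵥ S.nodeField i s
      + ∑ k, (grad (S.He k) (s.2 k) - grad (S.He k) (p.2 k)) ⬝ᵥ S.linkField k s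
      = -S.dissipation p s := by
  set z : ∀ i, Fin (n i) → ℝ := fun i => grad (S.Hn i) (s.1 i) - grad (S.Hn i) (p.1 i) with hz
  set w : κ → Fin m → ℝ := fun k => grad (S.He k) (s.2 k) - grad (S.He k) (p.2 k) with hw
  have hnode : ∑ i, z i ⬝ᵥ S.nodeField i s = -S.dissipation p s
      - ∑ i, ∑ k, S.B i k * ((S.G i)ᵀ *ᵥ z i ⬝ᵥ w k) := by
    rw [dissipation, neg_neg, ← Finset.sum_sub_distrib]
    refine Finset.sum_congr rfl fun i _ => ?_
    rw [hp.nodeField_eq, dotProduct_sub, dotProduct_mulVec (z i) (S.G i), ← mulVec_transpose,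
      dotProduct_sum]
    simp only [dotProduct_smul, smul_eq_mul, hz, hw]
  have hlink : ∑ k, w k ⬝ᵥ S.linkField k s
      = ∑ i, ∑ k, S.B i k * ((S.G i)ᵀ *ᵥ z i ⬝ᵥ w k) := by
    rw [Finset.sum_comm]
    refine Finset.sum_congr rfl fun k _ => ?_
    rw [dotProduct_comm, linkField, sum_dotProduct]
    simp only [hp.output_sub_ystar, smul_dotProduct, smul_eq_mul, hz]
  change ∑ i, z i ⬝ᵥ S.nodeField i s + ∑ k, w k ⬝ᵥ S.linkField k s = _
  rw [hnode, hlink, sub_add_cancel]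

variable (S)

/-- `γ` solves on `[0, ∞)` the differential-algebraic equations of the network whose dynamic nodes
are those of `D`. -/
structure IsSolution (γ : ℝ → NetworkState κ n m) : Prop where
  continuousOn : ContinuousOn γ (Ici 0)
  hasDerivWithinAt_fst : ∀ t ∈ Ici (0 : ℝ), ∀ i ∈ D,
    HasDerivWithinAt (fun τ => (γ τ).1 i) (S.nodeField i (γ t)) (Ici 0) t
  hasDerivWithinAt_snd : ∀ t ∈ Ici (0 : ℝ), ∀ k,
    HasDerivWithinAt (fun τ => (γ τ).2 k) (S.linkField k (γ t)) (Ici 0) t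
  mem_consistentSet : ∀ t ∈ Ici (0 : ℝ), γ t ∈ S.consistentSet D

namespace IsSolution

variable {S D} (hγ : S.IsSolution D γ)
include hγ

lemma hasDerivWithinAt_storage (hp : S.IsEquilibrium p) (ht : t ∈ Ici 0) (hd : γ t ∈ S.domain) :
    HasDerivWithinAt (fun τ => S.storage D p (γ τ)) (-S.dissipation p (γ t)) (Ici 0) t := by
  have hstatic : ∑ i, (grad (S.Hn i) ((γ t).1 i) - grad (S.Hn i) (p.1 i)) ⬝ᵥ S.nodeField i (γ t)
      = ∑ i ∈ D, (grad (S.Hn i) ((γ t).1 i) - grad (S.Hn i) (p.1 i)) ⬝ᵥ S.nodeField i (γ t) :=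
    (Finset.sum_subset (Finset.subset_univ D) fun i _ hi => by
      rw [hγ.mem_consistentSet t ht i hi, dotProduct_zero]).symm
  rw [← hp.power_balance, hstatic]
  refine (HasDerivWithinAt.fun_sum fun i hi => ?_).fun_add (HasDerivWithinAt.fun_sum fun k _ => ?_)
  · rw [sub_dotProduct, grad_dotProduct, grad_dotProduct]
    exact hasDerivWithinAt_bregman_comp _ (S.differentiableAt_Hn (hd.1 i))
      (hγ.hasDerivWithinAt_fst t ht i hi)
  · rw [sub_dotProduct, grad_dotProduct, grad_dotProduct]
    exact hasDerivWithinAt_bregman_comp _ (S.differentiableAt_He (hd.2 k))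
      (hγ.hasDerivWithinAt_snd t ht k)

lemma antitoneOn_storage (hp : S.IsEquilibrium p) {I : Set ℝ} (hI : Convex ℝ I)
    (hI0 : I ⊆ Ici 0) (hd : ∀ t ∈ I, γ t ∈ S.domain) :
    AntitoneOn (fun t => S.storage D p (γ t)) I := by
  have hderiv : ∀ t ∈ I, HasDerivWithinAt (fun τ => S.storage D p (γ τ))
      (-S.dissipation p (γ t)) I t := fun t ht =>
    (hγ.hasDerivWithinAt_storage hp (hI0 ht) (hd t ht)).mono hI0
  exact antitoneOn_of_hasDerivWithinAt_nonpos hI (fun t ht => (hderiv t ht).continuousWithinAt)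
    (fun t ht => (hderiv t (interior_subset ht)).mono interior_subset)
    fun t _ => neg_nonpos.2 (S.dissipation_nonneg p (γ t))

lemma exists_tendsto_storage (hp : S.IsEquilibrium p) (hd : ∀ t ∈ Ici 0, γ t ∈ S.domain) :
    ∃ L, Tendsto (fun t => S.storage D p (γ t)) atTop (𝓝 L) :=
  exists_tendsto_atTop_of_antitoneOn_Ici (hγ.antitoneOn_storage hp (convex_Ici 0) Subset.rfl hd)
    fun t ht => S.storage_nonneg D hp.mem_domain (hd t ht)

section Confined

variable (hK : IsCompact K) (hKS : K ⊆ S.domain) (hγK : ∀ t ∈ Ici 0, γ t ∈ K)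
include hK hKS hγK

/-- The dynamic variables are Lipschitz in time, and on a compact set they determine the static ones
uniformly continuously. -/
lemma uniformContinuousOn : UniformContinuousOn γ (Ici 0) := by
  let v : NetworkState κ n m → (∀ i : D, Fin (n i) → ℝ) × (κ → Fin m → ℝ) :=
    fun s => (fun i => S.nodeField i s, fun k => S.linkField k s)
  have hv : ContinuousOn v K :=
    ((continuousOn_pi.2 fun i : D => S.continuousOn_nodeField i).prodMk
      (continuousOn_pi.2 fun k => S.continuousOn_linkField k)).mono hKS
  obtain ⟨C, hC⟩ := hK.exists_bound_of_continuousOn hv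
  have hderiv : ∀ t ∈ Ici (0 : ℝ), HasDerivWithinAt (fun τ => (D.restrict (γ τ).1, (γ τ).2))
      (v (γ t)) (Ici 0) t := fun t ht =>
    (hasDerivWithinAt_pi.2 fun i : D => hγ.hasDerivWithinAt_fst t ht i i.2).prodMk
      (hasDerivWithinAt_pi.2 fun k => hγ.hasDerivWithinAt_snd t ht k)
  have hlip := (convex_Ici (0 : ℝ)).lipschitzOnWith_of_nnnorm_hasDerivWithin_le (C := C.toNNReal)
    hderiv fun t ht => NNReal.le_toNNReal_of_coe_le (hC _ (hγK t ht))
  exact uniformContinuousOn_of_comp_of_isCompact (S.isCompact_inter_consistentSet D hK hKS)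
    (by unfold Finset.restrict; fun_prop)
    ((S.injOn_restrict D).mono (inter_subset_inter_left _ hKS))
    (fun t ht => ⟨hγK t ht, hγ.mem_consistentSet t ht⟩) hlip.uniformContinuousOn

lemma uniformContinuousOn_comp {Y : Type*} [UniformSpace Y] {f : NetworkState κ n m → Y}
    (hf : ContinuousOn f S.domain) : UniformContinuousOn (fun t => f (γ t)) (Ici 0) :=
  (hK.uniformContinuousOn_of_continuous (hf.mono hKS)).comp (hγ.uniformContinuousOn hK hKS hγK) hγK

lemma tendsto_fst (hp : S.IsEquilibrium p) : Tendsto (fun t => (γ t).1) atTop (𝓝 p.1) := by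
  obtain ⟨L, hL⟩ := hγ.exists_tendsto_storage hp fun t ht => hKS (hγK t ht)
  have hrate : Tendsto (fun t => -S.dissipation p (γ t)) atTop (𝓝 0) :=
    tendsto_zero_of_hasDerivWithinAt_of_uniformContinuousOn
      (fun t ht => hγ.hasDerivWithinAt_storage hp ht (hKS (hγK t ht))) hL
      (hγ.uniformContinuousOn_comp hK hKS hγK (S.continuousOn_dissipation p).neg)
  exact tendsto_nhds_of_tendsto_zero_of_isCompact hK ((S.continuousOn_dissipation p).neg.mono hKS)
    continuousOn_fst (fun q hq h =>
      S.fst_eq_of_dissipation_eq_zero hp.mem_domain (hKS hq) (neg_eq_zero.1 h))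
    ((eventually_ge_atTop 0).mono hγK) hrate

lemma tendsto_nodeField (hp : S.IsEquilibrium p) (i : ι) :
    Tendsto (fun t => S.nodeField i (γ t)) atTop (𝓝 0) := by
  by_cases hi : i ∈ D
  · exact tendsto_zero_of_hasDerivWithinAt_of_uniformContinuousOn
      (fun t ht => hγ.hasDerivWithinAt_fst t ht i hi)
      (tendsto_pi_nhds.1 (hγ.tendsto_fst hK hKS hγK hp) i)
      (hγ.uniformContinuousOn_comp hK hKS hγK (S.continuousOn_nodeField i))
  · refine tendsto_const_nhds.congr' ?_
    filter_upwards [eventually_ge_atTop 0] with t ht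
    exact (hγ.mem_consistentSet t ht i hi).symm

lemma isEquilibrium_of_tendsto (hp : S.IsEquilibrium p) {l : Filter ℝ} [l.NeBot] (hl : l ≤ atTop)
    (hq : q ∈ K) (hlim : Tendsto γ l (𝓝 q)) : S.IsEquilibrium q := by
  have hlimK : Tendsto γ l (𝓝[S.domain] q) :=
    tendsto_nhdsWithin_iff.2 ⟨hlim, hl ((eventually_ge_atTop 0).mono fun t ht => hKS (hγK t ht))⟩
  refine hp.of_fst_eq (hKS hq) ?_ fun i => ?_
  · exact tendsto_nhds_unique ((continuous_fst.tendsto q).comp hlim)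
      ((hγ.tendsto_fst hK hKS hγK hp).mono_left hl)
  · exact tendsto_nhds_unique ((S.continuousOn_nodeField i q (hKS hq)).tendsto.comp hlimK)
      ((hγ.tendsto_nodeField hK hKS hγK hp i).mono_left hl)

/-- The storage relative to a cluster point `q` of the trajectory is monotone and vanishes along a
subsequence, so it vanishes in the limit. -/
lemma exists_isEquilibrium_tendsto (hp : S.IsEquilibrium p) :
    ∃ q, S.IsEquilibrium q ∧ Tendsto γ atTop (𝓝 q) := by
  let l : Ultrafilter ℝ := Ultrafilter.of atTop
  have hl : (l : Filter ℝ) ≤ atTop := Ultrafilter.of_le atTop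
  have hev : ∀ᶠ t in atTop, γ t ∈ K ∩ S.consistentSet D :=
    (eventually_ge_atTop 0).mono fun t ht => ⟨hγK t ht, hγ.mem_consistentSet t ht⟩
  obtain ⟨q, hqK, hlim⟩ := hK.ultrafilter_le_nhds (l.map γ)
    (le_principal_iff.2 (hl (hev.mono fun t ht => ht.1)))
  have hq := hγ.isEquilibrium_of_tendsto hK hKS hγK hp hl hqK hlim
  obtain ⟨L, hL⟩ := hγ.exists_tendsto_storage hq fun t ht => hKS (hγK t ht)
  have hL0 : L = 0 := by
    have hcont := (S.continuousOn_storage D q).continuousAt (S.isOpen_domain.mem_nhds hq.mem_domain)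
    rw [← S.storage_self D q]
    exact tendsto_nhds_unique (hL.mono_left hl) (hcont.tendsto.comp hlim)
  refine ⟨q, hq, tendsto_nhds_of_tendsto_zero_of_isCompact
    (S.isCompact_inter_consistentSet D hK hKS)
    ((S.continuousOn_storage D q).mono (inter_subset_left.trans hKS)) continuousOn_id
    (fun s hs h => ?_) hev (hL0 ▸ hL)⟩
  exact S.eq_of_storage_eq_zero D ⟨hq.mem_domain, hq.mem_consistentSet⟩ ⟨hKS hs.1, hs.2⟩ h

end Confined

end IsSolution

variable {S}

lemma IsEquilibrium.exists_isOpen_forall_isSolution_mem (hp : S.IsEquilibrium p)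
    (hK : K ∈ 𝓝 p) (hKS : K ⊆ S.domain) :
    ∃ U, IsOpen U ∧ p ∈ U ∧
      ∀ γ, S.IsSolution D γ → γ 0 ∈ U → ∀ t ∈ Ici (0 : ℝ), γ t ∈ K := by
  obtain ⟨ε, hε, hεK⟩ := Metric.nhds_basis_closedBall.mem_iff.1 hK
  have hballS : Metric.closedBall p ε ⊆ S.domain := hεK.trans hKS
  have hcompact := S.isCompact_inter_consistentSet D (isCompact_closedBall p ε) hballS
  obtain ⟨c, hc, hlt⟩ := exists_pos_forall_lt_imp_mem hcompact Metric.isOpen_ball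
    ((S.continuousOn_storage D p).mono (inter_subset_left.trans hballS))
    fun q hq hqb => S.storage_pos D ⟨hp.mem_domain, hp.mem_consistentSet⟩ ⟨hballS hq.1, hq.2⟩
      (ne_of_mem_of_not_mem (Metric.mem_ball_self hε) hqb).symm
  have hopen := ((S.continuousOn_storage D p).mono
    (Metric.ball_subset_closedBall.trans hballS)).isOpen_inter_preimage
    Metric.isOpen_ball (isOpen_Iio (a := c))
  refine ⟨_, hopen, ⟨Metric.mem_ball_self hε, by simpa using hc⟩, fun γ hγ ⟨hγ0, hγc⟩ t ht => ?_⟩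
  refine hεK (Metric.ball_subset_closedBall ?_)
  have hdist : ContinuousOn (fun t => dist (γ t) p) (Ici 0) :=
    (continuous_id.dist continuous_const).comp_continuousOn hγ.continuousOn
  refine forall_lt_of_forall_Icc_le_imp_lt hdist hγ0 (fun T hT hle => ?_) t ht
  have hanti := hγ.antitoneOn_storage hp (convex_Icc 0 T) Icc_subset_Ici_self
    fun t ht => hballS (hle t ht)
  have hTle := hanti (left_mem_Icc.2 hT) (right_mem_Icc.2 hT) hT
  exact hlt _ ⟨hle T (right_mem_Icc.2 hT), hγ.mem_consistentSet T hT⟩ (hTle.trans_lt hγc)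

theorem IsEquilibrium.exists_isOpen_forall_isSolution_exists_tendsto (hp : S.IsEquilibrium p) :
    ∃ U, IsOpen U ∧ p ∈ U ∧ ∀ γ, S.IsSolution D γ → γ 0 ∈ U →
      ∃ q, S.IsEquilibrium q ∧ Tendsto γ atTop (𝓝 q) := by
  obtain ⟨K, hpK, hKS, hK⟩ := local_compact_nhds (S.isOpen_domain.mem_nhds hp.mem_domain)
  obtain ⟨U, hU, hpU, hUK⟩ := hp.exists_isOpen_forall_isSolution_mem D hpK hKS
  exact ⟨U, hU, hpU, fun γ hγ hγ0 => hγ.exists_isEquilibrium_tendsto hK hKS (hUK γ hγ hγ0) hp⟩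

end PortHamiltonianNetwork

lemma continuous_prodMk_sumElim {X α β Y : Type*} [TopologicalSpace X] [TopologicalSpace Y] :
    Continuous fun q : X × (α → Y) × (β → Y) => (q.1, Sum.elim q.2.1 q.2.2) :=
  continuous_fst.prodMk (Homeomorph.sumArrowHomeomorphProdArrow.symm.continuous.comp continuous_snd)

namespace PortHamiltonianNetwork

variable {ι κ : Type*} [DecidableEq ι] {n : ι → ℕ} {m : ℕ} (S : PortHamiltonianNetwork ι κ n m)
  (C : Finset ι) {i : ι} {k : κ} {x : ∀ i, Fin (n i) → ℝ} {η : κ → Fin m → ℝ} {ξ : C → Fin m → ℝ}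

/-- The closed loop of the network with the integral controllers of the nodes in `C`. The integrator
`ξ_i` is a link with energy `|ξ_i|² / 2` and incidence `-1` at its only end, the node `i`, which
therefore receives the input `ξ_i`. -/
noncomputable def withIntegrators : PortHamiltonianNetwork ι (κ ⊕ C) n m where
  B := of fun i => Sum.elim (S.B i) fun c => if i = c then -1 else 0
  A := S.A
  dotProduct_A_mulVec_neg := S.dotProduct_A_mulVec_neg
  G := S.G
  δ := S.δ
  Ωn := S.Ωn
  isOpen_Ωn := S.isOpen_Ωn
  Hn := S.Hn
  contDiffOn_Hn := S.contDiffOn_Hn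
  strictConvexOn_Hn := S.strictConvexOn_Hn
  Ωe := Sum.elim S.Ωe fun _ => univ
  isOpen_Ωe := Sum.rec S.isOpen_Ωe fun _ => isOpen_univ
  He := Sum.elim S.He fun _ => halfNormSq
  contDiffOn_He := Sum.rec S.contDiffOn_He fun _ => contDiff_halfNormSq.contDiffOn
  strictConvexOn_He := Sum.rec S.strictConvexOn_He fun _ => strictConvexOn_halfNormSq
  ystar := S.ystar

lemma nodeField_withIntegrators [Fintype κ] (i : ι) :
    (S.withIntegrators C).nodeField i (x, Sum.elim η ξ)
      = S.nodeForce i x η ((if hi : i ∈ C then ξ ⟨i, hi⟩ else 0) + S.δ i) := by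
  have hsum : ∑ c : C, (if i = c then (-1 : ℝ) else 0) • ξ c
      = -if hi : i ∈ C then ξ ⟨i, hi⟩ else 0 := by
    split_ifs with hi
    · rw [Finset.sum_eq_single ⟨i, hi⟩ (fun c _ hc => ?_) (by simp), if_pos rfl, neg_one_smul]
      rw [if_neg fun h => hc (Subtype.ext h.symm), zero_smul]
    · rw [neg_zero]
      refine Finset.sum_eq_zero fun c _ => ?_
      rw [if_neg (ne_of_mem_of_not_mem c.2 hi).symm, zero_smul]
  simp only [nodeField, nodeForce, withIntegrators, Fintype.sum_sum_type, of_apply, Sum.elim_inl,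
    Sum.elim_inr, grad_halfNormSq, hsum, mulVec_add, mulVec_neg]
  abel

variable {C}

lemma nodeField_withIntegrators_of_mem [Fintype κ] (hi : i ∈ C) :
    (S.withIntegrators C).nodeField i (x, Sum.elim η ξ)
      = S.nodeForce i x η (ξ ⟨i, hi⟩ + S.δ i) := by
  rw [nodeField_withIntegrators, dif_pos hi]

lemma nodeField_withIntegrators_of_notMem [Fintype κ] (hi : i ∉ C) :
    (S.withIntegrators C).nodeField i (x, Sum.elim η ξ) = S.nodeForce i x η (S.δ i) := by
  rw [nodeField_withIntegrators, dif_neg hi, zero_add]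

lemma linkField_withIntegrators_inl [Fintype ι] (hB : ∑ i, S.B i k = 0) :
    (S.withIntegrators C).linkField (Sum.inl k) (x, Sum.elim η ξ)
      = ∑ i, S.B i k • S.output i x := by
  simp [linkField, withIntegrators, output, smul_sub, ← Finset.sum_smul, hB]

lemma linkField_withIntegrators_inr [Fintype ι] (c : C) :
    (S.withIntegrators C).linkField (Sum.inr c) (x, Sum.elim η ξ) = S.ystar - S.output c x := by
  simp [linkField, withIntegrators, output]

lemma isEquilibrium_withIntegrators_iff [Fintype κ] :
    (S.withIntegrators C).IsEquilibrium (x, Sum.elim η ξ) ↔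
      (∀ i, x i ∈ S.Ωn i) ∧ (∀ k, η k ∈ S.Ωe k) ∧
        (∀ i, ∀ hi : i ∈ C, S.nodeForce i x η (ξ ⟨i, hi⟩ + S.δ i) = 0) ∧
        (∀ i ∉ C, S.nodeForce i x η (S.δ i) = 0) ∧ ∀ i, S.output i x = S.ystar := by
  constructor
  · rintro ⟨⟨hx, hη⟩, hfield, hout⟩
    exact ⟨hx, fun k => hη (Sum.inl k),
      fun i hi => (S.nodeField_withIntegrators_of_mem hi).symm.trans (hfield i),
      fun i hi => (S.nodeField_withIntegrators_of_notMem hi).symm.trans (hfield i), hout⟩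
  · rintro ⟨hx, hη, hC, hC', hout⟩
    refine ⟨⟨hx, Sum.rec hη fun _ => mem_univ _⟩, fun i => ?_, hout⟩
    by_cases hi : i ∈ C
    · exact (S.nodeField_withIntegrators_of_mem hi).trans (hC i hi)
    · exact (S.nodeField_withIntegrators_of_notMem hi).trans (hC' i hi)

lemma isSolution_withIntegrators [Fintype ι] [Fintype κ] {D : Finset ι}
    {x : ℝ → ∀ i, Fin (n i) → ℝ} {η : ℝ → κ → Fin m → ℝ} {ξ : ℝ → C → Fin m → ℝ}
    (hB : ∀ k, ∑ i, S.B i k = 0) (hcont : ContinuousOn (fun t => (x t, η t, ξ t)) (Ici 0))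
    (hη : ∀ t ∈ Ici (0 : ℝ), ∀ k,
      HasDerivWithinAt (fun τ => η τ k) (∑ i, S.B i k • S.output i (x t)) (Ici 0) t)
    (hx : ∀ t ∈ Ici (0 : ℝ), ∀ i, ∀ hi : i ∈ C, i ∈ D →
      HasDerivWithinAt (fun τ => x τ i) (S.nodeForce i (x t) (η t) (ξ t ⟨i, hi⟩ + S.δ i)) (Ici 0) t)
    (hx' : ∀ t ∈ Ici (0 : ℝ), ∀ i ∉ C, i ∈ D →
      HasDerivWithinAt (fun τ => x τ i) (S.nodeForce i (x t) (η t) (S.δ i)) (Ici 0) t)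
    (h0 : ∀ t ∈ Ici (0 : ℝ), ∀ i, ∀ hi : i ∈ C, i ∉ D →
      S.nodeForce i (x t) (η t) (ξ t ⟨i, hi⟩ + S.δ i) = 0)
    (h0' : ∀ t ∈ Ici (0 : ℝ), ∀ i ∉ C, i ∉ D → S.nodeForce i (x t) (η t) (S.δ i) = 0)
    (hξ : ∀ t ∈ Ici (0 : ℝ), ∀ c : C,
      HasDerivWithinAt (fun τ => ξ τ c) (S.ystar - S.output c (x t)) (Ici 0) t) :
    (S.withIntegrators C).IsSolution D fun t => (x t, Sum.elim (η t) (ξ t)) where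
  continuousOn := continuous_prodMk_sumElim.comp_continuousOn hcont
  hasDerivWithinAt_fst t ht i hiD := by
    by_cases hi : i ∈ C
    · exact S.nodeField_withIntegrators_of_mem hi ▸ hx t ht i hi hiD
    · exact S.nodeField_withIntegrators_of_notMem hi ▸ hx' t ht i hi hiD
  hasDerivWithinAt_snd t ht
    | Sum.inl k => S.linkField_withIntegrators_inl (hB k) ▸ hη t ht k
    | Sum.inr c => S.linkField_withIntegrators_inr c ▸ hξ t ht c
  mem_consistentSet t ht i hiD := by
    by_cases hi : i ∈ C
    · exact (S.nodeField_withIntegrators_of_mem hi).trans (h0 t ht i hi hiD)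
    · exact (S.nodeField_withIntegrators_of_notMem hi).trans (h0' t ht i hi hiD)

end PortHamiltonianNetwork

lemma dotProduct_sub_mulVec_neg {p : Type*} [Fintype p] {J R : Matrix p p ℝ} (hJ : Jᵀ = -J)
    (hR : R.PosDef) {z : p → ℝ} (hz : z ≠ 0) : z ⬝ᵥ (J - R) *ᵥ z < 0 := by
  have hskew : z ⬝ᵥ J *ᵥ z = -(z ⬝ᵥ J *ᵥ z) := by
    conv_lhs => rw [dotProduct_mulVec, ← mulVec_transpose, hJ, dotProduct_comm]
    rw [neg_mulVec, dotProduct_neg]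
  have hpos : 0 < z ⬝ᵥ R *ᵥ z := by simpa using hR.dotProduct_mulVec_pos hz
  rw [sub_mulVec, dotProduct_sub]
  linarith

theorem output_agreement_decentralized_integral_control_general
    {ι κ : Type*} [Fintype ι] [DecidableEq ι] [Fintype κ] {n : ι → ℕ} {m : ℕ}
    (S : PortHamiltonianNetwork ι κ n m) (hB : ∀ k, ∑ i, S.B i k = 0)
    (I11 I12 I21 I22 : Finset ι) (hpart : I11 ∪ I12 ∪ I21 ∪ I22 = Finset.univ)
    (hdisj : Disjoint (I11 ∪ I21) (I12 ∪ I22))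
    (xbar : ∀ i, Fin (n i) → ℝ) (ηbar : κ → Fin m → ℝ) (ξbar : {i // i ∈ I11 ∪ I21} → Fin m → ℝ)
    (hxbar : ∀ i, xbar i ∈ S.Ωn i) (hηbar : ∀ k, ηbar k ∈ S.Ωe k)
    (hfeasa : ∀ i, S.output i xbar = S.ystar)
    (hfeasb : ∀ i, ∀ hi : i ∈ I11 ∪ I21, 0 = S.nodeForce i xbar ηbar (ξbar ⟨i, hi⟩ + S.δ i))
    (hfeasc : ∀ i ∈ I12 ∪ I22, 0 = S.nodeForce i xbar ηbar (S.δ i)) :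
    ∃ U : Set ((∀ i, Fin (n i) → ℝ) × (κ → Fin m → ℝ) × ({i // i ∈ I11 ∪ I21} → Fin m → ℝ)),
      IsOpen U ∧ (xbar, ηbar, ξbar) ∈ U ∧
      ∀ (x : ℝ → ∀ i, Fin (n i) → ℝ) (η : ℝ → κ → Fin m → ℝ)
        (ξ : ℝ → {i // i ∈ I11 ∪ I21} → Fin m → ℝ),
        ContinuousOn (fun t => (x t, η t, ξ t)) (Ici 0) →
        (∀ t ∈ Ici (0 : ℝ), ∀ k,
          HasDerivWithinAt (fun s => η s k) (∑ i, S.B i k • S.output i (x t)) (Ici 0) t) →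
        (∀ t ∈ Ici (0 : ℝ), ∀ i, ∀ hi : i ∈ I11, HasDerivWithinAt (fun s => x s i)
          (S.nodeForce i (x t) (η t) (ξ t ⟨i, Finset.mem_union_left _ hi⟩ + S.δ i)) (Ici 0) t) →
        (∀ t ∈ Ici (0 : ℝ), ∀ i ∈ I12, HasDerivWithinAt (fun s => x s i)
          (S.nodeForce i (x t) (η t) (S.δ i)) (Ici 0) t) →
        (∀ t ∈ Ici (0 : ℝ), ∀ i, ∀ hi : i ∈ I21,
          0 = S.nodeForce i (x t) (η t) (ξ t ⟨i, Finset.mem_union_right _ hi⟩ + S.δ i)) →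
        (∀ t ∈ Ici (0 : ℝ), ∀ i ∈ I22, 0 = S.nodeForce i (x t) (η t) (S.δ i)) →
        (∀ t ∈ Ici (0 : ℝ), ∀ i : {i // i ∈ I11 ∪ I21},
          HasDerivWithinAt (fun s => ξ s i) (S.ystar - S.output i.1 (x t)) (Ici 0) t) →
        (x 0, η 0, ξ 0) ∈ U →
        ∃ (xt : ∀ i, Fin (n i) → ℝ) (ηt : κ → Fin m → ℝ)
          (ξt : {i // i ∈ I11 ∪ I21} → Fin m → ℝ),
          (∀ i, xt i ∈ S.Ωn i) ∧ (∀ k, ηt k ∈ S.Ωe k) ∧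
          (∀ k, ∑ i, S.B i k • S.output i xt = 0) ∧
          (∀ i, ∀ hi : i ∈ I11,
            0 = S.nodeForce i xt ηt (ξt ⟨i, Finset.mem_union_left _ hi⟩ + S.δ i)) ∧
          (∀ i ∈ I12, 0 = S.nodeForce i xt ηt (S.δ i)) ∧
          (∀ i, ∀ hi : i ∈ I21,
            0 = S.nodeForce i xt ηt (ξt ⟨i, Finset.mem_union_right _ hi⟩ + S.δ i)) ∧
          (∀ i ∈ I22, 0 = S.nodeForce i xt ηt (S.δ i)) ∧
          Tendsto x atTop (𝓝 xt) ∧ Tendsto η atTop (𝓝 ηt) ∧ Tendsto ξ atTop (𝓝 ξt) ∧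
          ∀ i, S.output i xt = S.ystar := by
  have hC : ∀ i, i ∉ I11 ∪ I21 ↔ i ∈ I12 ∪ I22 := fun i => by
    have hi := hpart.ge (Finset.mem_univ i)
    grind [Finset.disjoint_left]
  have hp : (S.withIntegrators (I11 ∪ I21)).IsEquilibrium (xbar, Sum.elim ηbar ξbar) :=
    S.isEquilibrium_withIntegrators_iff.2 ⟨hxbar, hηbar, fun i hi => (hfeasb i hi).symm,
      fun i hi => (hfeasc i ((hC i).1 hi)).symm, hfeasa⟩
  obtain ⟨U, hU, hpU, hconv⟩ := hp.exists_isOpen_forall_isSolution_exists_tendsto (I11 ∪ I12)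
  refine ⟨_, hU.preimage continuous_prodMk_sumElim, hpU,
    fun x η ξ hcont hη h11 h12 h21 h22 hξ h0 => ?_⟩
  obtain ⟨⟨xt, θ⟩, hq, hlim⟩ := hconv _ (S.isSolution_withIntegrators hB hcont hη
    (fun t ht i hi hiD => h11 t ht i (by grind)) (fun t ht i hi hiD => h12 t ht i (by grind))
    (fun t ht i hi hiD => (h21 t ht i (by grind)).symm)
    (fun t ht i hi hiD => (h22 t ht i (by grind)).symm) hξ) h0
  obtain ⟨ηt, ξt, rfl⟩ : ∃ ηt ξt, θ = Sum.elim ηt ξt := ⟨_, _, (Sum.elim_comp_inl_inr θ).symm⟩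
  obtain ⟨hxt, hηt, hmem, hnotMem, hout⟩ := S.isEquilibrium_withIntegrators_iff.1 hq
  have hlim2 := tendsto_pi_nhds.1 hlim.snd_nhds
  refine ⟨xt, ηt, ξt, hxt, hηt, fun k => ?_, fun i hi => (hmem i _).symm,
    fun i hi => (hnotMem i (by grind)).symm, fun i hi => (hmem i _).symm,
    fun i hi => (hnotMem i (by grind)).symm, hlim.fst_nhds,
    tendsto_pi_nhds.2 fun k => hlim2 (Sum.inl k), tendsto_pi_nhds.2 fun c => hlim2 (Sum.inr c),
    hout⟩
  simp only [hout, ← Finset.sum_smul, hB, zero_smul]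

/-- Theorem 2: under the feasibility condition, the decentralized
integral controller `ξ̇_i = y* − G_iᵀ∇H_{n,i}(x_i)`, `u_i = ξ_i` at the nodes of
`I₁₁ ∪ I₂₁` locally achieves output agreement on the prescribed set point `y*`:
every closed-loop solution starting in a suitable open set `U` around
`(x̄, η̄, ξ̄)` converges to a closed-loop equilibrium at which
`G_iᵀ∇H_{n,i}(x̃_i) = y*` for every node `i`. -/
theorem output_agreement_decentralized_integral_control
    {n m N M : ℕ} (hn : 0 < n) (hm : 0 < m) (hN : 0 < N) (hM : 0 < M)
    (B : Matrix (Fin N) (Fin M) ℝ)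
    (hB1 : ∀ k, ∑ i, B i k = 0)
    (hBker : LinearMap.ker (Matrix.mulVecLin Bᵀ) =
      Submodule.span ℝ {(fun _ => (1 : ℝ) : Fin N → ℝ)})
    (J R : Fin N → Matrix (Fin n) (Fin n) ℝ)
    (hJ : ∀ i, (J i)ᵀ = -(J i)) (hR : ∀ i, (R i).PosDef)
    (G : Fin N → Matrix (Fin n) (Fin m) ℝ)
    (hGrank : ∀ i, LinearMap.ker (Matrix.mulVecLin (G i)) = ⊥)
    (δ : Fin N → Fin m → ℝ)
    (Ωn : Set (Fin n → ℝ)) (hΩno : IsOpen Ωn) (hΩnc : Convex ℝ Ωn)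
    (Ωe : Set (Fin m → ℝ)) (hΩeo : IsOpen Ωe) (hΩec : Convex ℝ Ωe)
    (Hn : Fin N → (Fin n → ℝ) → ℝ)
    (hHnC : ∀ i, ContDiffOn ℝ 1 (Hn i) Ωn)
    (hHnconv : ∀ i, StrictConvexOn ℝ Ωn (Hn i))
    (He : Fin M → (Fin m → ℝ) → ℝ)
    (hHeC : ∀ k, ContDiffOn ℝ 1 (He k) Ωe)
    (hHeconv : ∀ k, StrictConvexOn ℝ Ωe (He k))
    -- partition of the node set, with I₁₁ nonempty:
    (I11 I12 I21 I22 : Finset (Fin N))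
    (hpart : I11 ∪ I12 ∪ I21 ∪ I22 = Finset.univ)
    (h1112 : Disjoint I11 I12) (h1121 : Disjoint I11 I21)
    (h1122 : Disjoint I11 I22) (h1221 : Disjoint I12 I21)
    (h1222 : Disjoint I12 I22) (h2122 : Disjoint I21 I22)
    (hI11 : I11.Nonempty)
    -- the prescribed set point:
    (ystar : Fin m → ℝ)
    -- the feasibility condition (a), (b), (c):
    (xbar : Fin N → Fin n → ℝ) (ηbar : Fin M → Fin m → ℝ)
    (d : Fin N → Fin m → ℝ)
    (hxbar : ∀ i, xbar i ∈ Ωn) (hηbar : ∀ k, ηbar k ∈ Ωe)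
    (hfeasa : ∀ i, (G i)ᵀ *ᵥ grad (Hn i) (xbar i) = ystar)
    (hfeasb : ∀ i ∈ I11 ∪ I21, (0 : Fin n → ℝ) =
      (J i - R i) *ᵥ grad (Hn i) (xbar i)
        - (G i) *ᵥ (∑ k, B i k • grad (He k) (ηbar k)) + (G i) *ᵥ d i)
    (hfeasc : ∀ i ∈ I12 ∪ I22, (0 : Fin n → ℝ) =
      (J i - R i) *ᵥ grad (Hn i) (xbar i)
        - (G i) *ᵥ (∑ k, B i k • grad (He k) (ηbar k)) + (G i) *ᵥ δ i)
    -- the steady-state controller value ξ̄: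
    (ξbar : {i // i ∈ I11 ∪ I21} → Fin m → ℝ)
    (hξbar : ∀ i, ξbar i = d i.1 - δ i.1) :
    ∃ U : Set ((Fin N → Fin n → ℝ) × (Fin M → Fin m → ℝ) ×
      ({i // i ∈ I11 ∪ I21} → Fin m → ℝ)),
      IsOpen U ∧ (xbar, ηbar, ξbar) ∈ U ∧
      ∀ (x : ℝ → Fin N → Fin n → ℝ) (η : ℝ → Fin M → Fin m → ℝ)
        (ξ : ℝ → {i // i ∈ I11 ∪ I21} → Fin m → ℝ),
        -- (x, η, ξ) is a solution of the closed-loop system on [0, ∞):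
        ContinuousOn (fun t => (x t, η t, ξ t)) (Ici 0) →
        (∀ t ∈ Ici (0 : ℝ), ∀ k,
          HasDerivWithinAt (fun s => η s k)
            (∑ i, B i k • ((G i)ᵀ *ᵥ grad (Hn i) (x t i))) (Ici 0) t) →
        (∀ t ∈ Ici (0 : ℝ), ∀ i, ∀ hi : i ∈ I11,
          HasDerivWithinAt (fun s => x s i)
            ((J i - R i) *ᵥ grad (Hn i) (x t i)
              - (G i) *ᵥ (∑ k, B i k • grad (He k) (η t k))
              + (G i) *ᵥ (ξ t ⟨i, Finset.mem_union_left _ hi⟩ + δ i))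
            (Ici 0) t) →
        (∀ t ∈ Ici (0 : ℝ), ∀ i ∈ I12,
          HasDerivWithinAt (fun s => x s i)
            ((J i - R i) *ᵥ grad (Hn i) (x t i)
              - (G i) *ᵥ (∑ k, B i k • grad (He k) (η t k)) + (G i) *ᵥ δ i)
            (Ici 0) t) →
        (∀ t ∈ Ici (0 : ℝ), ∀ i, ∀ hi : i ∈ I21,
          (0 : Fin n → ℝ) = (J i - R i) *ᵥ grad (Hn i) (x t i)
            - (G i) *ᵥ (∑ k, B i k • grad (He k) (η t k))
            + (G i) *ᵥ (ξ t ⟨i, Finset.mem_union_right _ hi⟩ + δ i)) →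
        (∀ t ∈ Ici (0 : ℝ), ∀ i ∈ I22,
          (0 : Fin n → ℝ) = (J i - R i) *ᵥ grad (Hn i) (x t i)
            - (G i) *ᵥ (∑ k, B i k • grad (He k) (η t k)) + (G i) *ᵥ δ i) →
        -- the decentralized integral controller dynamics:
        (∀ t ∈ Ici (0 : ℝ), ∀ i : {i // i ∈ I11 ∪ I21},
          HasDerivWithinAt (fun s => ξ s i)
            (ystar - (G i.1)ᵀ *ᵥ grad (Hn i.1) (x t i.1)) (Ici 0) t) →
        -- starting in U:
        (x 0, η 0, ξ 0) ∈ U →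
        -- convergence to a closed-loop equilibrium with outputs equal to y*:
        ∃ (xt : Fin N → Fin n → ℝ) (ηt : Fin M → Fin m → ℝ)
          (ξt : {i // i ∈ I11 ∪ I21} → Fin m → ℝ),
          (∀ i, xt i ∈ Ωn) ∧ (∀ k, ηt k ∈ Ωe) ∧
          (∀ k, ∑ i, B i k • ((G i)ᵀ *ᵥ grad (Hn i) (xt i)) = 0) ∧
          (∀ i, ∀ hi : i ∈ I11, (0 : Fin n → ℝ) =
            (J i - R i) *ᵥ grad (Hn i) (xt i)
              - (G i) *ᵥ (∑ k, B i k • grad (He k) (ηt k))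
              + (G i) *ᵥ (ξt ⟨i, Finset.mem_union_left _ hi⟩ + δ i)) ∧
          (∀ i ∈ I12, (0 : Fin n → ℝ) =
            (J i - R i) *ᵥ grad (Hn i) (xt i)
              - (G i) *ᵥ (∑ k, B i k • grad (He k) (ηt k)) + (G i) *ᵥ δ i) ∧
          (∀ i, ∀ hi : i ∈ I21, (0 : Fin n → ℝ) =
            (J i - R i) *ᵥ grad (Hn i) (xt i)
              - (G i) *ᵥ (∑ k, B i k • grad (He k) (ηt k))
              + (G i) *ᵥ (ξt ⟨i, Finset.mem_union_right _ hi⟩ + δ i)) ∧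
          (∀ i ∈ I22, (0 : Fin n → ℝ) =
            (J i - R i) *ᵥ grad (Hn i) (xt i)
              - (G i) *ᵥ (∑ k, B i k • grad (He k) (ηt k)) + (G i) *ᵥ δ i) ∧
          Tendsto x atTop (𝓝 xt) ∧ Tendsto η atTop (𝓝 ηt) ∧
          Tendsto ξ atTop (𝓝 ξt) ∧
          ∀ i, (G i)ᵀ *ᵥ grad (Hn i) (xt i) = ystar := by
  let S : PortHamiltonianNetwork (Fin N) (Fin M) (fun _ => n) m :=
    { B, G, δ, Hn, He, ystar
      A := fun i => J i - R i
      dotProduct_A_mulVec_neg := fun i _ => dotProduct_sub_mulVec_neg (hJ i) (hR i)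
      Ωn := fun _ => Ωn, isOpen_Ωn := fun _ => hΩno
      contDiffOn_Hn := hHnC, strictConvexOn_Hn := hHnconv
      Ωe := fun _ => Ωe, isOpen_Ωe := fun _ => hΩeo
      contDiffOn_He := hHeC, strictConvexOn_He := hHeconv }
  have hdisj : Disjoint (I11 ∪ I21) (I12 ∪ I22) := by
    simp only [Finset.disjoint_union_left, Finset.disjoint_union_right]
    exact ⟨⟨h1112, h1221.symm⟩, h1122, h2122⟩
  exact output_agreement_decentralized_integral_control_general S hB1 I11 I12 I21 I22 hpart hdisj
    xbar ηbar ξbar hxbar hηbar hfeasa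
    (fun i hi => by rw [hξbar, sub_add_cancel]; exact hfeasb i hi) hfeasc
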